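/- For every real number t, the integral over x from 0 to ∞ of cos(2πtx) · cos(πx²) / cosh(πx) equals (1 + √2 · sin(πt²)) / (2√2 · cosh(πt)). -/

import Mathlib

/-!
With `f(z) = exp (iπz² - 2πitz)`, the two formulas for `∫ cos (πx² ∓ 2πtx) / cosh (πx) dx` average
to twice the wanted integral, and each is the real part of the Mordell integral
`J = ∫ f(x) / cosh (πx) dx` over `ℝ`, at `t` or `-t`. So everything follows from
`cosh (πt) J = e^{-iπ/4} + i e^{-iπt²}` (`integral_mordell_zero`).

To find `J`, compare the lines `im z = 0` and `im z = 1`. Since `cosh (πz)` changes sign under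
`z ↦ z + i` and has its only zero in the strip at `i/2`, any entire `f` bounded on the strip satisfies
`∫ (f(x) + f(x + i)) / cosh (πx) dx = 2 f(i/2)` (`integral_add_shift_div_cosh`). For the Gaussian,
`f(x + i) = -e^{2πt} e^{-2πx} f(x)`, and `e^{-2πx} / cosh (πx) = 2 e^{-πx} - 1 / cosh (πx)`, so the
left side becomes `(1 + e^{2πt}) J` minus a Gaussian integral with known value.

That `f` is not bounded on the strip and the last Gaussian integral diverges. Both defects vanish when
`iπz²` is replaced by `π(i - ε)z²` with `ε > 0` (`integral_mordell`); on the real line the integrands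
that remain are dominated by a multiple of `1 / cosh (πx)`, so `ε → 0` is allowed.
-/

open Real MeasureTheory Set Filter Topology

/-! ### The weight `1 / cosh (π x)` -/

lemma one_add_sq_le_cosh (x : ℝ) : 1 + x ^ 2 ≤ Real.cosh (π * x) := by
  have h1 : Real.cosh (2 * x) ≤ Real.cosh (π * x) := by
    rw [Real.cosh_le_cosh, abs_mul, abs_mul, abs_of_pos pi_pos, abs_two]
    gcongr
    exact Real.two_le_pi
  have h2 : x ^ 2 ≤ Real.sinh x ^ 2 := by
    rw [sq_le_sq, Real.abs_sinh]
    exact Real.self_le_sinh_iff.2 (abs_nonneg x)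
  have h3 := Real.cosh_sq x
  have h4 := Real.cosh_two_mul x
  nlinarith [sq_nonneg x]

lemma integrable_inv_cosh : Integrable fun x : ℝ => (Real.cosh (π * x))⁻¹ := by
  refine integrable_inv_one_add_sq.mono' ?_ (ae_of_all _ fun x => ?_)
  · refine Continuous.aestronglyMeasurable ?_
    exact (by fun_prop : Continuous fun x : ℝ => Real.cosh (π * x)).inv₀
      fun x => (Real.cosh_pos _).ne'
  · rw [Real.norm_of_nonneg (inv_nonneg.2 (Real.cosh_pos _).le)]
    exact inv_anti₀ (by positivity) (one_add_sq_le_cosh x)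

lemma integral_inv_cosh : ∫ x : ℝ, (Real.cosh (π * x))⁻¹ = 1 := by
  have hd : ∀ x : ℝ, HasDerivAt (fun x : ℝ => 2 / π * Real.arctan (Real.exp (π * x)))
      (Real.cosh (π * x))⁻¹ x := by
    intro x
    have h := (((hasDerivAt_id x).const_mul π).exp.arctan).const_mul (2 / π)
    simp only [id] at h
    convert! h using 1
    rw [Real.cosh_eq, Real.exp_neg]
    have := Real.exp_pos (π * x)
    field_simp
    ring
  have hexp : Tendsto (fun x : ℝ => Real.exp (π * x)) atTop atTop :=
    Real.tendsto_exp_atTop.comp (tendsto_id.const_mul_atTop pi_pos)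
  have hexp' : Tendsto (fun x : ℝ => Real.exp (π * x)) atBot (𝓝 0) :=
    Real.tendsto_exp_atBot.comp (tendsto_id.const_mul_atBot pi_pos)
  have htop := ((tendsto_nhds_of_tendsto_nhdsWithin tendsto_arctan_atTop).comp hexp).const_mul (2 / π)
  have hbot := ((Real.continuous_arctan.tendsto 0).comp hexp').const_mul (2 / π)
  rw [integral_of_hasDerivAt_of_tendsto hd integrable_inv_cosh hbot htop]
  simp only [Real.arctan_zero]
  field_simp
  ring

/-- A lower bound for `cosh (π z)` that makes the vertical sides of a long rectangle negligible and
confines the zeros to the imaginary axis. -/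
lemma norm_cosh_ge (x y : ℝ) : |x| ≤ ‖Complex.cosh (π * (x + y * Complex.I))‖ := by
  have h1 : |x| ≤ |Real.sinh (π * x)| := by
    rw [Real.abs_sinh]
    refine le_trans ?_ (Real.self_le_sinh_iff.2 (abs_nonneg _))
    rw [abs_mul, abs_of_pos pi_pos]
    nlinarith [abs_nonneg x, Real.two_le_pi]
  refine h1.trans ?_
  have h2 := abs_norm_sub_norm_le (Complex.exp (π * (x + y * Complex.I)))
    (-Complex.exp (-(π * (x + y * Complex.I))))
  rw [norm_neg, Complex.norm_exp, Complex.norm_exp, sub_neg_eq_add] at h2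
  rw [Complex.cosh, norm_div, Real.sinh_eq, abs_div]
  simp at h2 ⊢
  linarith

/-! ### Shifting the line of integration by `i` -/

/-- Cauchy's theorem on the strip `0 ≤ im z ≤ 1`, for functions that tend to zero at both ends. -/
lemma integral_shift (K : ℂ → ℂ) (hd : ∀ z : ℂ, 0 ≤ z.im → z.im ≤ 1 → DifferentiableAt ℂ K z)
    (C : ℝ) (hb : ∀ x y : ℝ, 0 ≤ y → y ≤ 1 → x ≠ 0 → ‖K (x + y * Complex.I)‖ ≤ C / |x|)
    (h0 : Integrable fun x : ℝ => K x) (h1 : Integrable fun x : ℝ => K (x + Complex.I)) :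
    ∫ x : ℝ, K x = ∫ x : ℝ, K (x + Complex.I) := by
  have t0 := intervalIntegral_tendsto_integral h0 tendsto_neg_atTop_atBot tendsto_id
  have t1 := intervalIntegral_tendsto_integral h1 tendsto_neg_atTop_atBot tendsto_id
  have hside : ∀ s : ℝ → ℝ, (∀ T, |s T| = |T|) →
      Tendsto (fun T : ℝ => ∫ y : ℝ in (0:ℝ)..1, K (s T + y * Complex.I)) atTop (𝓝 0) := by
    intro s hs
    have hz : Tendsto (fun T : ℝ => C / T) atTop (𝓝 0) := tendsto_const_nhds.div_atTop tendsto_id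
    refine squeeze_zero_norm' ?_ hz
    filter_upwards [eventually_gt_atTop 0] with T hT
    have hsT : |s T| = T := by rw [hs, abs_of_pos hT]
    refine (intervalIntegral.norm_integral_le_of_norm_le_const (C := C / T) ?_).trans (by simp)
    intro y hy
    rw [uIoc_of_le zero_le_one] at hy
    have := hb (s T) y hy.1.le hy.2 (by intro h; rw [h] at hsT; simp at hsT; linarith)
    rwa [hsT] at this
  have hR := hside (fun T => T) (fun _ => rfl)
  have hL := hside (fun T => -T) (fun _ => abs_neg _)
  have key : ∀ T : ℝ, (∫ x : ℝ in -T..T, K x) - (∫ x : ℝ in -T..T, K (x + Complex.I)) =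
      -(Complex.I * (∫ y : ℝ in (0:ℝ)..1, K (T + y * Complex.I)) -
      Complex.I * (∫ y : ℝ in (0:ℝ)..1, K ((-T : ℝ) + y * Complex.I))) := by
    intro T
    have h := Complex.integral_boundary_rect_eq_zero_of_differentiableOn K (-T : ℝ)
      (T + Complex.I) (by
        intro z hz
        have hz2 := (Complex.mem_reProdIm.1 hz).2
        simp at hz2
        exact (hd z hz2.1 hz2.2).differentiableWithinAt)
    simp at h
    push_cast
    linear_combination h
  have lim := ((hR.const_mul Complex.I).sub (hL.const_mul Complex.I)).neg
  have lim2 := (t0.sub t1).congr key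
  have := tendsto_nhds_unique lim2 lim
  simpa [sub_eq_zero] using this

/-- The two-line formula for the strip: `1 / cosh (π z)` has a single pole there, at `i / 2`, and
changes sign under `z ↦ z + i`. Subtracting the constant `f (i / 2)` from `f` removes the pole, and
the constant contributes through `∫ 1 / cosh (π x) = 1`. -/
lemma integral_add_shift_div_cosh (f : ℂ → ℂ) (hf : Differentiable ℂ f) (C : ℝ)
    (hb : ∀ x y : ℝ, 0 ≤ y → y ≤ 1 → ‖f (x + y * Complex.I)‖ ≤ C) :
    ∫ x : ℝ, (f x + f (x + Complex.I)) * ((Real.cosh (π * x))⁻¹ : ℝ) = 2 * f (Complex.I / 2) := by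
  set a : ℂ := Complex.I / 2 with ha
  set c : ℂ → ℂ := fun z => Complex.cosh (π * z) with hc
  have hcd : ∀ z, HasDerivAt c (Complex.sinh (π * z) * (π * 1)) z := fun z =>
    ((hasDerivAt_id z).const_mul (π : ℂ)).ccosh
  have hca : c a = 0 := by
    have : (π : ℂ) * (Complex.I / 2) = (π / 2 : ℂ) * Complex.I := by ring
    simp only [hc, ha, this, Complex.cosh_mul_I, Complex.cos_pi_div_two]
  have hcda : deriv c a ≠ 0 := by
    have : (π : ℂ) * (Complex.I / 2) = (π / 2 : ℂ) * Complex.I := by ring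
    rw [(hcd a).deriv, ha, this, Complex.sinh_mul_I, Complex.sin_pi_div_two]
    simp [pi_ne_zero]
  have hc0 : ∀ z : ℂ, 0 ≤ z.im → z.im ≤ 1 → z ≠ a → c z ≠ 0 := by
    intro z h0 h1 hza h
    apply hza
    have hre : z.re = 0 := by
      have := norm_cosh_ge z.re z.im
      rw [Complex.re_add_im] at this
      simp only [hc] at h
      rw [h, norm_zero] at this
      exact abs_nonpos_iff.1 this
    have hz : z = (z.im : ℂ) * Complex.I := by
      apply Complex.ext <;> simp [hre]
    have hcos : Real.cos (π * z.im) = 0 := by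
      simp only [hc] at h
      rw [hz, ← mul_assoc, Complex.cosh_mul_I] at h
      exact_mod_cast h
    have him : π * z.im = π / 2 := by
      refine Real.injOn_cos ⟨by positivity, ?_⟩ ⟨by positivity, by linarith [pi_pos]⟩ ?_
      · nlinarith [pi_pos]
      · rw [hcos, Real.cos_pi_div_two]
    have him' : z.im = 1 / 2 := by
      field_simp at him
      linarith
    rw [hz, him', ha]
    push_cast
    ring
  -- the quotient `(f z - f a) / c z` with its removable singularity at `a` filled in
  set K : ℂ → ℂ := fun z => dslope f a z / dslope c a z with hK
  have hds : ∀ g : ℂ → ℂ, Differentiable ℂ g → Differentiable ℂ (dslope g a) := by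
    intro g hg
    rw [← differentiableOn_univ, Complex.differentiableOn_dslope univ_mem]
    exact hg.differentiableOn
  have hKd : ∀ z : ℂ, 0 ≤ z.im → z.im ≤ 1 → DifferentiableAt ℂ K z := by
    intro z h0 h1
    refine (hds f hf z).div (hds c (fun z => (hcd z).differentiableAt) z) ?_
    by_cases hza : z = a
    · rw [hza, dslope_same]; exact hcda
    · intro h
      have := sub_smul_dslope c a z
      rw [h, hca] at this
      exact hc0 z h0 h1 hza (by simpa using this.symm)
  have hKe : ∀ z : ℂ, z ≠ a → K z = (f z - f a) / c z := by
    intro z hza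
    simp only [hK]
    rw [dslope_of_ne _ hza, dslope_of_ne _ hza, slope_def_field, slope_def_field, hca, sub_zero,
      div_div_div_cancel_right₀ (sub_ne_zero.2 hza)]
  have hfa : ‖f a‖ ≤ C := by
    have := hb 0 (1/2) (by norm_num) (by norm_num)
    convert this using 3
    rw [ha]; push_cast; ring
  have hKb : ∀ x y : ℝ, 0 ≤ y → y ≤ 1 → x ≠ 0 → ‖K (x + y * Complex.I)‖ ≤ (2 * C) / |x| := by
    intro x y h0 h1 hx
    rw [hKe _ (fun h => hx (by simpa [ha] using congrArg Complex.re h)), norm_div]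
    have hx' : 0 < |x| := abs_pos.2 hx
    have h2 : ‖f (x + y * Complex.I) - f a‖ ≤ 2 * C :=
      (norm_sub_le _ _).trans (by linarith [hb x y h0 h1])
    have h3 := norm_cosh_ge x y
    have : 0 ≤ 2 * C := (norm_nonneg _).trans h2
    gcongr
  have hcx : ∀ x : ℝ, c x = (Real.cosh (π * x) : ℂ) := by intro x; simp [hc]
  have hcx1 : ∀ x : ℝ, c (x + Complex.I) = -(Real.cosh (π * x) : ℂ) := by
    intro x
    simp [hc, mul_add, Complex.cosh_add, Complex.cosh_mul_I, Complex.sinh_mul_I]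
  have hne0 : ∀ x : ℝ, (x : ℂ) ≠ a := fun x h => by
    simpa [ha] using congrArg Complex.im h
  have hne1 : ∀ x : ℝ, (x : ℂ) + Complex.I ≠ a := fun x h => by
    have := congrArg Complex.im h
    simp [ha] at this
  have e0 : ∀ x : ℝ, K x = (f x - f a) * ((Real.cosh (π * x))⁻¹ : ℝ) := by
    intro x
    rw [hKe _ (hne0 x), hcx, Complex.ofReal_inv, div_eq_mul_inv]
  have e1 : ∀ x : ℝ, K (x + Complex.I) =
      -((f (x + Complex.I) - f a) * ((Real.cosh (π * x))⁻¹ : ℝ)) := by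
    intro x
    rw [hKe _ (hne1 x), hcx1, Complex.ofReal_inv, div_eq_mul_inv, inv_neg, mul_neg]
  have hfc := hf.continuous
  have hint := integrable_inv_cosh.ofReal (𝕜 := ℂ)
  have i0 : Integrable fun x : ℝ => f x * ((Real.cosh (π * x))⁻¹ : ℝ) := by
    refine hint.bdd_mul (c := C) (by fun_prop) (ae_of_all _ fun x => ?_)
    simpa using hb x 0 le_rfl zero_le_one
  have i1 : Integrable fun x : ℝ => f (x + Complex.I) * ((Real.cosh (π * x))⁻¹ : ℝ) := by
    refine hint.bdd_mul (c := C) (by fun_prop) (ae_of_all _ fun x => ?_)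
    simpa using hb x 1 zero_le_one le_rfl
  have ia : Integrable fun x : ℝ => f a * ((Real.cosh (π * x))⁻¹ : ℝ) := hint.const_mul _
  have va : ∫ x : ℝ, f a * ((Real.cosh (π * x))⁻¹ : ℝ) = f a := by
    rw [integral_const_mul, integral_complex_ofReal, integral_inv_cosh]
    simp
  have := integral_shift K hKd (2 * C) hKb
    (by simp only [e0, sub_mul]; exact i0.sub ia)
    (by simp only [e1, sub_mul]; exact (i1.sub ia).neg)
  simp only [e0, e1, sub_mul] at this
  rw [integral_neg, integral_sub i0 ia, integral_sub i1 ia, va] at this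
  simp only [add_mul]
  rw [integral_add i0 i1]
  linear_combination this

/-! ### The regularised Mordell integral -/

/-- The Gaussian `exp (π (i - ε) z² - 2 π i t z)`; `ε > 0` makes it bounded on horizontal strips. -/
noncomputable def mordellGauss (t ε : ℝ) (z : ℂ) : ℂ :=
  Complex.exp (π * (Complex.I - ε) * z ^ 2 - 2 * π * Complex.I * t * z)

lemma norm_mordellGauss (t ε x y : ℝ) : ‖mordellGauss t ε (x + y * Complex.I)‖ =
    Real.exp (π * (-ε * (x ^ 2 - y ^ 2) - 2 * x * y + 2 * t * y)) := by
  rw [mordellGauss, Complex.norm_exp]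
  congr 1
  simp [pow_two]
  ring

lemma norm_mordellGauss_le {ε : ℝ} (hε : 0 < ε) (t x y : ℝ) (h0 : 0 ≤ y) (h1 : y ≤ 1) :
    ‖mordellGauss t ε (x + y * Complex.I)‖ ≤ Real.exp (π * (ε + 1 / ε + 2 * |t|)) := by
  rw [norm_mordellGauss]
  refine Real.exp_le_exp.2 (mul_le_mul_of_nonneg_left ?_ pi_pos.le)
  have hy : y ^ 2 ≤ 1 := by nlinarith
  have h2 : t * y ≤ |t| := by nlinarith [le_abs_self t, abs_nonneg t]
  -- completing the square in `-ε x² - 2 x y`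
  have h3 : -ε * x ^ 2 - 2 * x * y ≤ 1 / ε := by
    rw [le_div_iff₀ hε]
    nlinarith [sq_nonneg (ε * x + y)]
  nlinarith

/-- The factor `E(x) = exp (2πt + πε - 2πiεx)` in `f (x + i) = -E(x) e^{-2πx} f(x)` for the Gaussian
`f = mordellGauss t ε`. -/
noncomputable def mordellFactor (t ε x : ℝ) : ℂ :=
  Complex.exp (2 * π * t + π * ε - 2 * π * Complex.I * ε * x)

lemma norm_mordellFactor (t ε x : ℝ) :
    ‖mordellFactor t ε x‖ = Real.exp (2 * π * t + π * ε) := by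
  rw [mordellFactor, Complex.norm_exp]
  simp

lemma mordellGauss_add_I (t ε x : ℝ) : mordellGauss t ε (x + Complex.I) =
    -(mordellFactor t ε x * Complex.exp (-(2 * π * x)) * mordellGauss t ε x) := by
  rw [mordellGauss, mordellGauss, mordellFactor, ← Complex.exp_add, ← Complex.exp_add, neg_eq_neg_one_mul,
    ← Complex.exp_neg_pi_mul_I, ← Complex.exp_add]
  congr 1
  linear_combination (2 * π * x - 2 * π * t - π * ε + π * Complex.I) * Complex.I_sq

lemma integrable_mordell {ε : ℝ} (hε : 0 ≤ ε) (t : ℝ) : Integrable fun x : ℝ =>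
    (1 + mordellFactor t ε x) * mordellGauss t ε x * ((Real.cosh (π * x))⁻¹ : ℝ) := by
  refine (integrable_inv_cosh.ofReal (𝕜 := ℂ)).bdd_mul (c := 1 + Real.exp (2 * π * t + π * ε))
    ?_ (ae_of_all _ fun x => ?_)
  · refine Continuous.aestronglyMeasurable ?_
    unfold mordellFactor mordellGauss
    fun_prop
  · have h := norm_mordellGauss t ε x 0
    simp only [Complex.ofReal_zero, zero_mul, add_zero] at h
    rw [norm_mul, h]
    have h1 : ‖1 + mordellFactor t ε x‖ ≤ 1 + Real.exp (2 * π * t + π * ε) := by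
      refine (norm_add_le _ _).trans ?_
      rw [norm_mordellFactor, norm_one]
    refine (mul_le_of_le_one_right (norm_nonneg _) ?_).trans h1
    rw [Real.exp_le_one_iff]
    have := mul_nonneg pi_pos.le (mul_nonneg hε (sq_nonneg x))
    nlinarith

/-- The formula `∫ (f(x) + f(x + i)) / cosh (πx) dx = 2 f(i/2)` for the regularised Gaussian, with the
part coming from `e^{-2πx} / cosh (πx)` moved to the right and evaluated as a Gaussian integral. -/
lemma integral_mordell {ε : ℝ} (hε : 0 < ε) (t : ℝ) :
    ∫ x : ℝ, (1 + mordellFactor t ε x) * mordellGauss t ε x * ((Real.cosh (π * x))⁻¹ : ℝ) =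
    2 * mordellGauss t ε (Complex.I / 2) +
    2 * ((π / -(π * (Complex.I - ε))) ^ (1 / 2 : ℂ) * Complex.exp ((2 * π * t + π * ε) -
      (-π - 2 * π * Complex.I * ε - 2 * π * Complex.I * t) ^ 2 / (4 * (π * (Complex.I - ε))))) := by
  have hre : ((π : ℂ) * (Complex.I - ε)).re < 0 := by
    simp
    positivity
  have hq := integral_cexp_quadratic hre
    (-π - 2 * π * Complex.I * ε - 2 * π * Complex.I * t) (2 * π * t + π * ε)
  have hqi := integrable_cexp_quadratic' hre
    (-π - 2 * π * Complex.I * ε - 2 * π * Complex.I * t) (2 * π * t + π * ε)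
  have hs := integral_add_shift_div_cosh (mordellGauss t ε)
    (by unfold mordellGauss; fun_prop) _ (fun x y => norm_mordellGauss_le hε t x y)
  -- this rests on `(1 + e^{-2πx}) / cosh (πx) = 2 e^{-πx}`
  have hpt : ∀ x : ℝ, (mordellGauss t ε x + mordellGauss t ε (x + Complex.I)) *
      ((Real.cosh (π * x))⁻¹ : ℝ) =
      (1 + mordellFactor t ε x) * mordellGauss t ε x * ((Real.cosh (π * x))⁻¹ : ℝ) -
      2 * Complex.exp (π * (Complex.I - ε) * x ^ 2 +
        (-π - 2 * π * Complex.I * ε - 2 * π * Complex.I * t) * x + (2 * π * t + π * ε)) := by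
    intro x
    have hE : Complex.exp (π * (Complex.I - ε) * x ^ 2 +
        (-π - 2 * π * Complex.I * ε - 2 * π * Complex.I * t) * x + (2 * π * t + π * ε)) =
        mordellFactor t ε x * Complex.exp (-(π * x)) * mordellGauss t ε x := by
      rw [mordellGauss, mordellFactor, ← Complex.exp_add, ← Complex.exp_add]
      congr 1
      ring
    have h2 : Complex.exp (-(2 * π * x)) = Complex.exp (-(π * x)) ^ 2 := by
      rw [← Complex.exp_nat_mul]
      congr 1
      push_cast
      ring
    have h3 : Complex.exp (π * x) * Complex.exp (-(π * x)) = 1 := by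
      rw [← Complex.exp_add]; simp
    have h4 : (Real.cosh (π * x) : ℂ) =
        (Complex.exp (π * x) + Complex.exp (-(π * x))) / 2 := by
      rw [← Complex.cosh]; push_cast; rfl
    have h5 : (Real.cosh (π * x) : ℂ) ≠ 0 := by
      exact_mod_cast (Real.cosh_pos _).ne'
    rw [hE, mordellGauss_add_I, h2, Complex.ofReal_inv]
    field_simp
    rw [h4]
    linear_combination mordellFactor t ε x * mordellGauss t ε x * h3
  simp only [hpt] at hs
  rw [integral_sub (integrable_mordell hε.le t) (hqi.const_mul 2), integral_const_mul, hq] at hs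
  linear_combination hs

/-! ### The limit `ε → 0` -/

/-- The Mordell integral `∫ exp (πiτx² - 2πitx) / cosh (πx) dx` at `τ = 1`. -/
lemma integral_mordell_zero (t : ℝ) :
    ∫ x : ℝ, mordellGauss t 0 x * ((Real.cosh (π * x))⁻¹ : ℝ) =
    (Complex.exp (-(π / 4 * Complex.I)) + Complex.I * Complex.exp (-(π * t ^ 2 * Complex.I))) /
      Real.cosh (π * t) := by
  have hL : Tendsto (fun ε : ℝ => ∫ x : ℝ,
      (1 + mordellFactor t ε x) * mordellGauss t ε x * ((Real.cosh (π * x))⁻¹ : ℝ)) (𝓝[>] 0)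
      (𝓝 (∫ x : ℝ,
      (1 + mordellFactor t 0 x) * mordellGauss t 0 x * ((Real.cosh (π * x))⁻¹ : ℝ))) := by
    refine tendsto_integral_filter_of_dominated_convergence
      (fun x => (1 + Real.exp (2 * π * t + π)) * (Real.cosh (π * x))⁻¹) ?_ ?_
      (integrable_inv_cosh.const_mul _) (ae_of_all _ fun x => ?_)
    · filter_upwards [self_mem_nhdsWithin] with ε hε
      exact (integrable_mordell (le_of_lt hε) t).aestronglyMeasurable
    · filter_upwards [Ioo_mem_nhdsGT (zero_lt_one (α := ℝ))] with ε hε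
      refine ae_of_all _ fun x => ?_
      have h := norm_mordellGauss t ε x 0
      simp only [Complex.ofReal_zero, zero_mul, add_zero] at h
      rw [norm_mul, norm_mul, h, Complex.norm_real,
        Real.norm_of_nonneg (inv_nonneg.2 (Real.cosh_pos _).le)]
      have h1 : ‖1 + mordellFactor t ε x‖ ≤ 1 + Real.exp (2 * π * t + π) := by
        refine (norm_add_le _ _).trans ?_
        rw [norm_mordellFactor, norm_one]
        gcongr
        nlinarith [pi_pos, hε.2]
      refine mul_le_mul_of_nonneg_right ?_ (inv_nonneg.2 (Real.cosh_pos _).le)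
      refine (mul_le_of_le_one_right (norm_nonneg _) ?_).trans h1
      rw [Real.exp_le_one_iff]
      have := mul_nonneg pi_pos.le (mul_nonneg hε.1.le (sq_nonneg x))
      nlinarith
    · refine tendsto_nhdsWithin_of_tendsto_nhds (Continuous.tendsto ?_ 0)
      unfold mordellFactor mordellGauss
      fun_prop
  have hI : (π : ℂ) / -(π * (Complex.I - (0 : ℝ))) = Complex.I := by
    have : (π : ℂ) ≠ 0 := by exact_mod_cast pi_ne_zero
    have := Complex.I_ne_zero
    simp
    field_simp
    simp
  have hR : ContinuousAt (fun ε : ℝ => 2 * mordellGauss t ε (Complex.I / 2) +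
    2 * ((π / -(π * (Complex.I - ε))) ^ (1 / 2 : ℂ) * Complex.exp ((2 * π * t + π * ε) -
      (-π - 2 * π * Complex.I * ε - 2 * π * Complex.I * t) ^ 2 /
        (4 * (π * (Complex.I - ε)))))) 0 := by
    have hne : (π : ℂ) * (Complex.I - (0 : ℝ)) ≠ 0 := by simp [pi_ne_zero]
    have hd : ContinuousAt (fun ε : ℝ => (π : ℂ) / -(π * (Complex.I - ε))) 0 :=
      ContinuousAt.div (by fun_prop) (by fun_prop) (neg_ne_zero.2 hne)
    have hcp : ContinuousAt (fun ε : ℝ => ((π : ℂ) / -(π * (Complex.I - ε))) ^ (1 / 2 : ℂ)) 0 :=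
      hd.cpow continuousAt_const (by rw [hI]; simp [Complex.mem_slitPlane_iff])
    have hq : ContinuousAt (fun ε : ℝ =>
        (-π - 2 * π * Complex.I * ε - 2 * π * Complex.I * t) ^ 2 /
        (4 * (π * (Complex.I - ε)))) 0 :=
      ContinuousAt.div (by fun_prop) (by fun_prop) (mul_ne_zero (by norm_num) hne)
    unfold mordellGauss
    fun_prop
  have hR' := hR.tendsto.mono_left (nhdsWithin_le_nhds (s := Ioi 0))
  have heq := tendsto_nhds_unique (hL.congr' (by
    filter_upwards [self_mem_nhdsWithin] with ε hε
    exact integral_mordell hε t)) hR'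
  have hF : ∀ x : ℝ, mordellFactor t 0 x = Complex.exp (2 * π * t) := by
    intro x; simp [mordellFactor]
  simp only [hF, mul_assoc, integral_const_mul] at heq
  have hpow : Complex.I ^ (1 / 2 : ℂ) = Complex.exp (π / 4 * Complex.I) := by
    rw [Complex.cpow_def_of_ne_zero Complex.I_ne_zero, Complex.log_I]
    congr 1
    ring
  rw [hI, hpow] at heq
  set J := ∫ x : ℝ, mordellGauss t 0 x * ((Real.cosh (π * x))⁻¹ : ℝ)
  have g1 : mordellGauss t 0 (Complex.I / 2) =
      Complex.exp (π * t) * Complex.exp (-(π / 4 * Complex.I)) := by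
    rw [mordellGauss, ← Complex.exp_add]
    congr 1
    push_cast
    linear_combination (π * Complex.I / 4 - π * t) * Complex.I_sq
  have g2 : Complex.exp (π / 4 * Complex.I) * Complex.exp (2 * (π * t) + π * (0 : ℝ) -
      (-π - 2 * (π * (Complex.I * (0 : ℝ))) - 2 * (π * (Complex.I * t))) ^ 2 /
      (4 * (π * (Complex.I - (0 : ℝ))))) =
      Complex.exp (π * t) * (Complex.I * Complex.exp (-(π * t ^ 2 * Complex.I))) := by
    have h1 : (4 : ℂ) * (π * (Complex.I - (0 : ℝ))) ≠ 0 := by simp [pi_ne_zero]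
    have hq : (-π - 2 * (π * (Complex.I * (0 : ℝ))) - 2 * (π * (Complex.I * t))) ^ 2 /
        (4 * (π * (Complex.I - (0 : ℝ)))) = -(π * Complex.I / 4) * (1 + 2 * Complex.I * t) ^ 2 := by
      rw [div_eq_iff h1]
      push_cast
      linear_combination π ^ 2 * (1 + 2 * Complex.I * t) ^ 2 * Complex.I_sq
    have hpi : Complex.I * Complex.exp (-(π * t ^ 2 * Complex.I)) =
        Complex.exp (π / 2 * Complex.I) * Complex.exp (-(π * t ^ 2 * Complex.I)) := by
      rw [Complex.exp_pi_div_two_mul_I]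
    rw [hq, hpi, ← Complex.exp_add, ← Complex.exp_add, ← Complex.exp_add]
    congr 1
    push_cast
    linear_combination (π * t + π * Complex.I * t ^ 2) * Complex.I_sq
  have g3 : Complex.exp (2 * (π * t)) = Complex.exp (π * t) ^ 2 := by
    rw [← Complex.exp_nat_mul]
    push_cast
    rfl
  have g4 : Complex.exp (π * t) * Complex.exp (-(π * t)) = 1 := by
    rw [← Complex.exp_add]; simp
  have g5 : (Real.cosh (π * t) : ℂ) =
      (Complex.exp (π * t) + Complex.exp (-(π * t))) / 2 := by
    rw [← Complex.cosh]; push_cast; rfl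
  have g6 : (Real.cosh (π * t) : ℂ) ≠ 0 := by
    exact_mod_cast (Real.cosh_pos _).ne'
  rw [g1, g2, g3] at heq
  rw [eq_div_iff g6, g5]
  linear_combination (Complex.exp (-(π * t)) / 2) * heq +
    (Complex.exp (-(π / 4 * Complex.I)) + Complex.I * Complex.exp (-(π * t ^ 2 * Complex.I)) -
      J * Complex.exp (π * t) / 2) * g4

theorem stmt_10 (t : ℝ) :
    ∫ x in Set.Ioi (0:ℝ), Real.cos (2 * π * t * x) * Real.cos (π * x ^ 2) / Real.cosh (π * x)
      = (1 + Real.sqrt 2 * Real.sin (π * t ^ 2)) / (2 * Real.sqrt 2 * Real.cosh (π * t)) := by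
  have hint : ∀ s : ℝ, Integrable fun x : ℝ =>
      mordellGauss s 0 x * ((Real.cosh (π * x))⁻¹ : ℝ) := by
    intro s
    refine (integrable_inv_cosh.ofReal (𝕜 := ℂ)).bdd_mul (c := 1) ?_ (ae_of_all _ fun x => ?_)
    · refine Continuous.aestronglyMeasurable ?_
      unfold mordellGauss
      fun_prop
    · have h := norm_mordellGauss s 0 x 0
      simp at h
      exact h.le
  have hre : ∀ s x : ℝ, (mordellGauss s 0 x * ((Real.cosh (π * x))⁻¹ : ℝ)).re =
      Real.cos (π * x ^ 2 - 2 * π * s * x) * (Real.cosh (π * x))⁻¹ := by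
    intro s x
    rw [Complex.re_mul_ofReal, mordellGauss]
    have : (π : ℂ) * (Complex.I - (0 : ℝ)) * x ^ 2 - 2 * π * Complex.I * s * x =
        ((π * x ^ 2 - 2 * π * s * x : ℝ) : ℂ) * Complex.I := by
      push_cast; ring
    rw [this, Complex.exp_ofReal_mul_I_re]
  have hi : ∀ s : ℝ, Integrable fun x : ℝ =>
      Real.cos (π * x ^ 2 - 2 * π * s * x) * (Real.cosh (π * x))⁻¹ := by
    intro s
    have := (hint s).re
    simpa only [RCLike.re_eq_complex_re, hre] using this
  have hv : ∀ s : ℝ, ∫ x : ℝ, Real.cos (π * x ^ 2 - 2 * π * s * x) * (Real.cosh (π * x))⁻¹ =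
      (Real.sqrt 2 / 2 + Real.sin (π * s ^ 2)) / Real.cosh (π * s) := by
    intro s
    have h := integral_re (hint s)
    simp only [RCLike.re_eq_complex_re, hre] at h
    rw [h, integral_mordell_zero, Complex.div_ofReal_re]
    have e1 : -((π : ℂ) / 4 * Complex.I) = ((-(π / 4) : ℝ) : ℂ) * Complex.I := by
      push_cast; ring
    have e2 : -((π : ℂ) * s ^ 2 * Complex.I) = ((-(π * s ^ 2) : ℝ) : ℂ) * Complex.I := by
      push_cast; ring
    rw [e1, e2, Complex.add_re, Complex.exp_ofReal_mul_I_re, Complex.I_mul_re,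
      Complex.exp_ofReal_mul_I_im, Real.cos_neg, Real.sin_neg, Real.cos_pi_div_four, neg_neg]
  -- the integrand is even, so the half-line integral is half of the integral over `ℝ`
  have habs := integral_comp_abs (f := fun x : ℝ =>
    Real.cos (2 * π * t * x) * Real.cos (π * x ^ 2) / Real.cosh (π * x))
  have hpt : ∀ x : ℝ, Real.cos (2 * π * t * |x|) * Real.cos (π * |x| ^ 2) / Real.cosh (π * |x|) =
      1 / 2 * (Real.cos (π * x ^ 2 - 2 * π * t * x) * (Real.cosh (π * x))⁻¹ +
        Real.cos (π * x ^ 2 - 2 * π * (-t) * x) * (Real.cosh (π * x))⁻¹) := by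
    intro x
    have h1 : Real.cos (2 * π * t * |x|) = Real.cos (2 * π * t * x) := by
      rcases abs_choice x with h | h <;> rw [h]
      rw [mul_neg, Real.cos_neg]
    have h2 : Real.cosh (π * |x|) = Real.cosh (π * x) := by
      rcases abs_choice x with h | h <;> rw [h]
      rw [mul_neg, Real.cosh_neg]
    have h3 : π * x ^ 2 - 2 * π * (-t) * x = π * x ^ 2 + 2 * π * t * x := by ring
    rw [h1, h2, h3, sq_abs, Real.cos_sub, Real.cos_add]
    ring
  simp only [hpt] at habs
  rw [integral_const_mul, integral_add (hi t) (hi (-t)), hv, hv, neg_sq, mul_neg, Real.cosh_neg]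
    at habs
  have hc := (Real.cosh_pos (π * t)).ne'
  have h2 : Real.sqrt 2 ^ 2 = 2 := Real.sq_sqrt (by norm_num)
  have h2' : Real.sqrt 2 ≠ 0 := by positivity
  rw [eq_div_iff (by positivity)]
  field_simp at habs
  linear_combination (-Real.sqrt 2 / 4) * habs + h2 / 2
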